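/- Under hypotheses H(M), H(F), H(G), H(γ), H(Ψ), E ∈ X*, the smallness condition c_F > c_G‖γ‖^p, and assuming additionally that F is strictly monotone (so that the solution map S of Problem 2 is single-valued), there exist constants c₀, c₂, c₅ > 0 such that, setting D₁ = {x ∈ K ∩ D(L) : ‖x‖_X ≤ c₀ and ‖Lx‖_{X*} ≤ c₅} and D₂ = {ξ ∈ Y* : ‖ξ‖_{Y*} ≤ c₂}, the multivalued map Q(z,ξ) = {S(z,ξ)} × G(γz) maps D₁ × D₂ into itself: for every (z,ξ) ∈ D₁ × D₂ one has S(z,ξ) ∈ D₁ and G(γz) ⊆ D₂. -/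

import Mathlib

open Filter Topology Bornology Set

noncomputable section

/-- Weak convergence of a sequence in a normed space: convergence tested
against every continuous linear functional. -/
def WeakConv {V : Type*} [NormedAddCommGroup V] [NormedSpace ℝ V]
    (x : ℕ → V) (x₀ : V) : Prop :=
  ∀ f : V →L[ℝ] ℝ, Tendsto (fun n => f (x n)) atTop (𝓝 (f x₀))

/-- Weak-star convergence of a sequence of continuous linear functionals
(which coincides with weak convergence when the underlying space is reflexive). -/
def WeakStarConv {V : Type*} [NormedAddCommGroup V] [NormedSpace ℝ V]
    (f : ℕ → V →L[ℝ] ℝ) (f₀ : V →L[ℝ] ℝ) : Prop :=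
  ∀ v : V, Tendsto (fun n => f n v) atTop (𝓝 (f₀ v))

/-- Reflexivity of a real normed space, expressed via surjectivity of the
canonical embedding into the double dual. -/
def IsReflexiveSpace (V : Type*) [NormedAddCommGroup V] [NormedSpace ℝ V] : Prop :=
  Function.Surjective ⇑(NormedSpace.inclusionInDoubleDual ℝ V)

/-- Clarke generalized directional derivative of `J` at `u` in direction `v`. -/
def clarkeDD {V : Type*} [NormedAddCommGroup V] [NormedSpace ℝ V]
    (J : V → ℝ) (u v : V) : ℝ :=
  limsup (fun q : V × ℝ => (J (q.1 + q.2 • v) - J q.1) / q.2)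
    ((𝓝 u) ×ˢ (𝓝[>] (0 : ℝ)))

/-- Clarke generalized subdifferential of `J` at `u`. -/
def clarkeSub {V : Type*} [NormedAddCommGroup V] [NormedSpace ℝ V]
    (J : V → ℝ) (u : V) : Set (V →L[ℝ] ℝ) :=
  {g | ∀ v : V, g v ≤ clarkeDD J u v}

/-- The data of the evolution multivalued quasi-variational inequality:
spaces `X`, `Y`, the (unbounded) operator `L` with domain `DL`, the constraint
set `K`, the constraint map `M`, the operator `F`, the multivalued map `G`,
the trace operator `gam`, the bifunction `Psi`, the right-hand side `E`, and
the constants appearing in the hypotheses. -/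
structure QVISetting (X Y : Type*) [NormedAddCommGroup X] [NormedSpace ℝ X]
    [NormedAddCommGroup Y] [NormedSpace ℝ Y] where
  DL : Set X
  L : X → X →L[ℝ] ℝ
  K : Set X
  M : X → Set X
  F : X → X →L[ℝ] ℝ
  G : Y → Set (Y →L[ℝ] ℝ)
  gam : X →L[ℝ] Y
  Psi : X → X → ℝ
  E : X →L[ℝ] ℝ
  p : ℝ
  cF : ℝ
  dF : ℝ
  cG : ℝ
  dG : ℝ
  cPsi : ℝ
  dPsi : ℝ
  ePsi : ℝ
  beta : ℝ

namespace QVISetting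

variable {X Y : Type*} [NormedAddCommGroup X] [NormedSpace ℝ X]
  [NormedAddCommGroup Y] [NormedSpace ℝ Y] (S : QVISetting X Y)

/-- Weak convergence in `W = D(L)` equipped with the graph norm:
weak convergence in `X` together with weak convergence of `L xₙ` in `X*`. -/
def WConvW (x : ℕ → X) (x₀ : X) : Prop :=
  WeakConv x x₀ ∧ WeakStarConv (fun n => S.L (x n)) (S.L x₀)

/-- H(L): `L` is linear on its domain `DL`, densely defined, monotone, and
maximal monotone. -/
def HL : Prop :=
  (0 : X) ∈ S.DL ∧
  (∀ a ∈ S.DL, ∀ b ∈ S.DL, ∀ s t : ℝ,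
      s • a + t • b ∈ S.DL ∧ S.L (s • a + t • b) = s • S.L a + t • S.L b) ∧
  Dense S.DL ∧
  (∀ u ∈ S.DL, ∀ v ∈ S.DL, 0 ≤ (S.L u - S.L v) (u - v)) ∧
  (∀ (x : X) (xs : X →L[ℝ] ℝ),
      (∀ v ∈ S.DL, 0 ≤ (xs - S.L v) (x - v)) → x ∈ S.DL ∧ xs = S.L x)

/-- H(K): `K` is nonempty, closed and convex. -/
def HK : Prop := S.K.Nonempty ∧ IsClosed S.K ∧ Convex ℝ S.K

/-- H(M): `M` has nonempty closed convex values contained in `K`; `0` lies in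
the norm-interior of `⋂_{w ∈ K} M w`; `M` has a weakly closed graph with
respect to `L`; and the Mosco-type approximation property holds. -/
def HM : Prop :=
  (∀ z ∈ S.K, (S.M z).Nonempty ∧ IsClosed (S.M z) ∧ Convex ℝ (S.M z) ∧ S.M z ⊆ S.K) ∧
  (0 : X) ∈ interior (⋂ w ∈ S.K, S.M w) ∧
  (∀ (y x : ℕ → X) (y₀ x₀ : X), (∀ n, y n ∈ S.K) →
      (∀ n, x n ∈ S.M (y n) ∩ S.DL) →
      S.WConvW y y₀ → S.WConvW x x₀ → x₀ ∈ S.M y₀ ∩ S.DL) ∧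
  (∀ (y : ℕ → X) (y₀ : X), (∀ n, y n ∈ S.K) → S.WConvW y y₀ →
      ∀ x₀ ∈ S.M y₀ ∩ S.DL, ∃ x : ℕ → X,
        (∀ n, x n ∈ S.M (y n) ∩ S.DL) ∧ Tendsto x atTop (𝓝 x₀))

/-- H(F): `F` is bounded, monotone, hemicontinuous and `p`-coercive. -/
def HF : Prop :=
  (∀ B : Set X, IsBounded B → IsBounded (S.F '' B)) ∧
  (∀ u v : X, 0 ≤ (S.F u - S.F v) (u - v)) ∧
  (∀ u v w : X, Tendsto (fun t : ℝ => S.F (u + t • v) w) (𝓝 0) (𝓝 (S.F u w))) ∧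
  1 < S.p ∧ 0 < S.cF ∧ 0 ≤ S.dF ∧
  (∀ x : X, S.cF * ‖x‖ ^ S.p - S.dF ≤ S.F x x)

/-- H(G): `G` has nonempty closed convex values, sequentially strongly–weakly
closed graph, and satisfies the `(p-1)`-growth condition. -/
def HG : Prop :=
  (∀ z : Y, (S.G z).Nonempty ∧ IsClosed (S.G z) ∧ Convex ℝ (S.G z)) ∧
  (∀ (z : ℕ → Y) (z₀ : Y) (ξ : ℕ → Y →L[ℝ] ℝ) (ξ₀ : Y →L[ℝ] ℝ),
      Tendsto z atTop (𝓝 z₀) → (∀ n, ξ n ∈ S.G (z n)) →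
      WeakStarConv ξ ξ₀ → ξ₀ ∈ S.G z₀) ∧
  0 ≤ S.cG ∧ 0 ≤ S.dG ∧
  (∀ z : Y, ∀ ξ ∈ S.G z, ‖ξ‖ ≤ S.cG * ‖z‖ ^ (S.p - 1) + S.dG)

/-- H(γ): `gam` is compact on `W`: it maps weakly convergent sequences in `W`
to strongly convergent sequences in `Y`. -/
def Hgam : Prop :=
  ∀ (x : ℕ → X) (x₀ : X), S.WConvW x x₀ →
    Tendsto (fun n => S.gam (x n)) atTop (𝓝 (S.gam x₀))

/-- H(Ψ): conditions (i)–(iv) on the bifunction `Psi`. -/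
def HPsi : Prop :=
  (∀ x : X, ConvexOn ℝ Set.univ (S.Psi x) ∧ LowerSemicontinuous (S.Psi x)) ∧
  (∃ (η : ℝ) (b : X → X → X → ℝ), 0 < η ∧ η < S.p ∧
    (∀ a u v : X, 0 ≤ b a u v) ∧
    (∀ A B C : Set X, IsBounded A → IsBounded B → IsBounded C →
        ∃ Cb : ℝ, ∀ a ∈ A, ∀ u ∈ B, ∀ v ∈ C, b a u v ≤ Cb) ∧
    (∀ x y₁ y₂ : X, S.Psi x y₁ - S.Psi x y₂ ≤ b x y₁ y₂ * ‖y₁ - y₂‖ ^ η) ∧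
    (∀ B : Set X, IsBounded B → ∀ ε > (0 : ℝ), ∃ R : ℝ, ∀ z ∈ B, ∀ x : X,
        R ≤ ‖x‖ → b z 0 x / ‖x‖ ^ (S.p - η) ≤ ε)) ∧
  (∀ (w x y : ℕ → X) (w₀ x₀ y₀ : X),
      S.WConvW w w₀ → S.WConvW x x₀ → Tendsto y atTop (𝓝 y₀) →
      limsup (fun n => S.Psi (w n) (y n) - S.Psi (w n) (x n)) atTop ≤
        S.Psi w₀ y₀ - S.Psi w₀ x₀) ∧
  (∀ v : X, ∃ g : X →L[ℝ] ℝ, ∀ y : X, S.Psi v 0 + g y ≤ S.Psi v y) ∧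
  (0 ≤ S.ePsi ∧ ∀ v : X, |S.Psi v 0| ≤ S.ePsi) ∧
  (0 ≤ S.cPsi ∧ 0 ≤ S.dPsi ∧ 1 ≤ S.beta ∧ S.beta < S.p ∧
    ∀ v y : X, -S.cPsi * ‖y‖ ^ S.beta - S.dPsi ≤ S.Psi v y)

/-- The `(S₊)`-property of `F` with respect to `L`. -/
def SPlus : Prop :=
  ∀ (x : ℕ → X) (x₀ : X), S.WConvW x x₀ →
    limsup (fun n => S.F (x n) (x n - x₀)) atTop ≤ 0 →
    Tendsto x atTop (𝓝 x₀)

/-- Strict monotonicity of `F`. -/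
def StrictlyMonotoneF : Prop :=
  ∀ u v : X, u ≠ v → 0 < (S.F u - S.F v) (u - v)

/-- Solution set of Problem 1. -/
def Sol1 : Set X :=
  {x | x ∈ S.M x ∩ S.DL ∧ ∃ ξ ∈ S.G (S.gam x), ∀ y ∈ S.M x ∩ S.DL,
      S.Psi x x - S.Psi x y ≤
        S.L x (y - x) + S.F x (y - x) - S.E (y - x) + ξ (S.gam (y - x))}

/-- Solution set of Problem 2 with parameters `(z, ξ)`. -/
def Sol2 (z : X) (ξ : Y →L[ℝ] ℝ) : Set X :=
  {x | x ∈ S.M z ∩ S.DL ∧ ∀ y ∈ S.M z ∩ S.DL,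
      S.Psi z x - S.Psi z y ≤
        S.L x (y - x) + S.F x (y - x) - S.E (y - x) + ξ (S.gam (y - x))}

/-- Solution set of Problem 3 (with `G = ∂_C J ∘ γ`). -/
def Sol3 (J : Y → ℝ) : Set X :=
  {x | x ∈ S.M x ∩ S.DL ∧ ∃ ξ ∈ clarkeSub J (S.gam x), ∀ y ∈ S.M x ∩ S.DL,
      S.Psi x x - S.Psi x y ≤
        S.L x (y - x) + S.F x (y - x) - S.E (y - x) + ξ (S.gam (y - x))}

/-- Solution set of Problem 4 (quasi-variational–hemivariational inequality). -/
def Sol4 (J : Y → ℝ) : Set X :=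
  {x | x ∈ S.M x ∩ S.DL ∧ ∀ y ∈ S.M x ∩ S.DL,
      S.Psi x x - S.Psi x y ≤
        S.L x (y - x) + S.F x (y - x) - S.E (y - x) +
          clarkeDD J (S.gam x) (S.gam (y - x))}

/-- Solution set of Problem 5 with a real-valued convex function `Φ`
independent of the first variable. -/
def Sol5 (Φ : X → ℝ) : Set X :=
  {x | x ∈ S.M x ∩ S.DL ∧ ∃ ξ ∈ S.G (S.gam x), ∀ y ∈ S.M x ∩ S.DL,
      Φ x - Φ y ≤
        S.L x (y - x) + S.F x (y - x) - S.E (y - x) + ξ (S.gam (y - x))}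

/-- Solution set of Problem 5 with an extended-real-valued function `Φ`. -/
def Sol5E (Φ : X → EReal) : Set X :=
  {x | x ∈ S.M x ∩ S.DL ∧ ∃ ξ ∈ S.G (S.gam x), ∀ y ∈ S.M x ∩ S.DL,
      Φ x ≤
        ((S.L x (y - x) + S.F x (y - x) - S.E (y - x) + ξ (S.gam (y - x)) : ℝ) : EReal)
          + Φ y}

/-- Sequential weak compactness of a set in `W`. -/
def SeqWeakCompactW (A : Set X) : Prop :=
  ∀ x : ℕ → X, (∀ n, x n ∈ A) →
    ∃ x₀ ∈ A, ∃ φ : ℕ → ℕ, StrictMono φ ∧ S.WConvW (x ∘ φ) x₀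

end QVISetting

/-! Testing Problem 2 with `y = 0` gives
`c_F‖x‖^p ≤ A + c_Ψ‖x‖^β + (‖E‖ + ‖ξ‖‖γ‖)‖x‖` for every solution `x`. If `‖x‖ > R` and `‖ξ‖` is at
most the growth bound `c_G(‖γ‖R)^(p-1) + d_G + 1` of `G ∘ γ` on the ball of radius `R`, then
`‖ξ‖‖γ‖‖x‖` is at most `c_G‖γ‖^p‖x‖^p` plus a linear term; as `c_G‖γ‖^p < c_F` and `1, β < p`, this
is impossible once `R` is large. Testing with `y = v ∈ D(L)` in a fixed ball around `0`, which lies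
in every `M(z)`, then bounds `⟨Lx, v⟩` from below on a dense subset of that ball, hence `‖Lx‖`. -/

theorem isLittleO_rpow_rpow_atTop {a b : ℝ} (hab : a < b) :
    (fun t : ℝ => t ^ a) =o[atTop] fun t : ℝ => t ^ b := by
  refine Asymptotics.isLittleO_of_tendsto' ?_ ?_
  · filter_upwards [eventually_gt_atTop 0] with t ht hb
    exact absurd hb (Real.rpow_pos_of_pos ht b).ne'
  · refine (tendsto_rpow_neg_atTop (sub_pos.2 hab)).congr' ?_
    filter_upwards [eventually_gt_atTop 0] with t ht
    rw [← Real.rpow_sub ht, neg_sub]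

theorem eventually_add_mul_rpow_add_mul_lt (A B D : ℝ) {β p δ : ℝ} (hβ : β < p) (hp : 1 < p)
    (hδ : 0 < δ) : ∀ᶠ t : ℝ in atTop, A + B * t ^ β + D * t < δ * t ^ p := by
  have hconst : (fun _ : ℝ => A) =o[atTop] fun t : ℝ => t ^ p := by
    simpa using (isLittleO_rpow_rpow_atTop (zero_lt_one.trans hp)).const_mul_left A
  have hlin : (fun t : ℝ => D * t) =o[atTop] fun t : ℝ => t ^ p := by
    simpa using (isLittleO_rpow_rpow_atTop hp).const_mul_left D
  have hlower := (hconst.add ((isLittleO_rpow_rpow_atTop hβ).const_mul_left B)).add hlin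
  filter_upwards [hlower.def (half_pos hδ), eventually_gt_atTop 0] with t hle ht
  have hpos : 0 < t ^ p := Real.rpow_pos_of_pos ht p
  rw [Real.norm_of_nonneg hpos.le] at hle
  calc A + B * t ^ β + D * t ≤ δ / 2 * t ^ p := (Real.le_norm_self _).trans hle
    _ < δ * t ^ p := by gcongr; exact half_lt_self hδ

theorem opNorm_le_div_of_dense_of_neg_le {V : Type*} [NormedAddCommGroup V] [NormedSpace ℝ V]
    {D : Set V} (hD : Dense D) {f : V →L[ℝ] ℝ} {r C : ℝ} (hr : 0 < r)
    (h : ∀ v ∈ D, ‖v‖ < r → -C ≤ f v) : ‖f‖ ≤ C / r := by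
  have hball : Metric.closedBall (0 : V) r ⊆ closure (Metric.ball 0 r ∩ D) := by
    rw [← closure_ball 0 hr.ne']
    exact closure_minimal (hD.open_subset_closure_inter Metric.isOpen_ball) isClosed_closure
  have hlower : closure (Metric.ball 0 r ∩ D) ⊆ {v | -C ≤ f v} :=
    closure_minimal (fun v hv => h v hv.2 (mem_ball_zero_iff.1 hv.1))
      (isClosed_le continuous_const f.continuous)
  refine f.opNorm_bound_of_ball_bound hr C fun v hv => abs_le.2 ⟨hlower (hball hv), ?_⟩
  have hneg : -C ≤ f (-v) := hlower (hball (by simpa using hv))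
  rw [map_neg] at hneg
  exact neg_le_neg_iff.1 hneg

namespace QVISetting

variable {X Y : Type*} [NormedAddCommGroup X] [NormedSpace ℝ X]
  [NormedAddCommGroup Y] [NormedSpace ℝ Y] {S : QVISetting X Y}

theorem HL.L_apply_self_nonneg (hL : S.HL) {x : X} (hx : x ∈ S.DL) : 0 ≤ S.L x x := by
  obtain ⟨h0, hlin, -, hmono, -⟩ := hL
  have hL0 : S.L 0 = 0 := by simpa using (hlin 0 h0 0 h0 0 0).2
  simpa [hL0] using hmono x hx 0 h0

theorem HPsi.exists_Psi_le (hPsi : S.HPsi) {A B : Set X} (hA : IsBounded A) (hB : IsBounded B) :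
    ∃ C, ∀ z ∈ A, ∀ y ∈ B, S.Psi z y ≤ C := by
  obtain ⟨-, ⟨η, b, hη, -, hb, hbdd, hdiff, -⟩, -, -, ⟨-, hzero⟩, -⟩ := hPsi
  obtain ⟨Cb, hCb⟩ := hbdd A B {0} hA hB isBounded_singleton
  obtain ⟨R, hR⟩ := hB.exists_norm_le
  refine ⟨S.ePsi + Cb * R ^ η, fun z hz y hy => ?_⟩
  have hincr : S.Psi z y - S.Psi z 0 ≤ Cb * R ^ η :=
    calc S.Psi z y - S.Psi z 0 ≤ b z y 0 * ‖y‖ ^ η := by simpa using hdiff z y 0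
      _ ≤ Cb * R ^ η := by
        have hbC := hCb z hz y hy 0 rfl
        have hCb0 := (hb z y 0).trans hbC
        gcongr
        exact hR y hy
  linarith [(abs_le.1 (hzero z)).2]

/-- The quantitative part of the hypotheses H(L), H(M), H(F), H(G), H(Ψ), from which a priori bounds
for Problem 2 are derived. The Hölder-type condition on `Ψ` enters through the upper bounds on
bounded sets that it implies. -/
structure AprioriConditions (S : QVISetting X Y) : Prop where
  zero_mem_DL : (0 : X) ∈ S.DL
  dense_DL : Dense S.DL
  L_apply_self_nonneg : ∀ x ∈ S.DL, 0 ≤ S.L x x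
  M_subset_K : ∀ z ∈ S.K, S.M z ⊆ S.K
  zero_mem_interior_M : (0 : X) ∈ interior (⋂ w ∈ S.K, S.M w)
  F_bounded : ∀ B : Set X, IsBounded B → IsBounded (S.F '' B)
  F_coercive : ∀ x, S.cF * ‖x‖ ^ S.p - S.dF ≤ S.F x x
  cG_nonneg : 0 ≤ S.cG
  dG_nonneg : 0 ≤ S.dG
  G_growth : ∀ z, ∀ ξ ∈ S.G z, ‖ξ‖ ≤ S.cG * ‖z‖ ^ (S.p - 1) + S.dG
  Psi_zero_le : ∀ z, S.Psi z 0 ≤ S.ePsi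
  exists_Psi_le : ∀ A B : Set X, IsBounded A → IsBounded B → ∃ C, ∀ z ∈ A, ∀ y ∈ B, S.Psi z y ≤ C
  cPsi_nonneg : 0 ≤ S.cPsi
  one_le_beta : 1 ≤ S.beta
  beta_lt_p : S.beta < S.p
  le_Psi : ∀ z y, -S.cPsi * ‖y‖ ^ S.beta - S.dPsi ≤ S.Psi z y

theorem AprioriConditions.of_hypotheses (hL : S.HL) (hM : S.HM) (hF : S.HF) (hG : S.HG)
    (hPsi : S.HPsi) : S.AprioriConditions := by
  have hPsi_le := fun A B hA hB => hPsi.exists_Psi_le (A := A) (B := B) hA hB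
  have hL_nonneg := fun x hx => hL.L_apply_self_nonneg (x := x) hx
  obtain ⟨h0, -, hdense, -⟩ := hL
  obtain ⟨hMval, hMint, -⟩ := hM
  obtain ⟨hFbdd, -, -, -, -, -, hFcoer⟩ := hF
  obtain ⟨-, -, hcG, hdG, hgrowth⟩ := hG
  obtain ⟨-, -, -, -, ⟨-, hzero⟩, hcPsi, -, hβ, hβp, hlower⟩ := hPsi
  exact
    { zero_mem_DL := h0
      dense_DL := hdense
      L_apply_self_nonneg := hL_nonneg
      M_subset_K := fun z hz => (hMval z hz).2.2.2
      zero_mem_interior_M := hMint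
      F_bounded := hFbdd
      F_coercive := hFcoer
      cG_nonneg := hcG
      dG_nonneg := hdG
      G_growth := hgrowth
      Psi_zero_le := fun z => (abs_le.1 (hzero z)).2
      exists_Psi_le := hPsi_le
      cPsi_nonneg := hcPsi
      one_le_beta := hβ
      beta_lt_p := hβp
      le_Psi := hlower }

theorem E_sub_comp_gam_apply_le (S : QVISetting X Y) (ξ : Y →L[ℝ] ℝ) (v : X) :
    S.E v - ξ (S.gam v) ≤ (‖S.E‖ + ‖ξ‖ * ‖S.gam‖) * ‖v‖ :=
  calc S.E v - ξ (S.gam v) ≤ ‖(S.E - ξ.comp S.gam) v‖ := Real.le_norm_self _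
    _ ≤ ‖S.E - ξ.comp S.gam‖ * ‖v‖ := ContinuousLinearMap.le_opNorm _ v
    _ ≤ (‖S.E‖ + ‖ξ‖ * ‖S.gam‖) * ‖v‖ := by
      gcongr
      exact (norm_sub_le _ _).trans (by gcongr; exact ξ.opNorm_comp_le S.gam)

section Sol2

variable {z x y : X} {ξ : Y →L[ℝ] ℝ}

theorem F_apply_self_le_of_mem_Sol2 (hx : x ∈ S.Sol2 z ξ) (hLx : 0 ≤ S.L x x)
    (h0 : 0 ∈ S.M z ∩ S.DL) :
    S.F x x ≤ S.Psi z 0 - S.Psi z x + (‖S.E‖ + ‖ξ‖ * ‖S.gam‖) * ‖x‖ := by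
  have hvi := hx.2 0 h0
  simp only [zero_sub, map_neg] at hvi
  linarith [S.E_sub_comp_gam_apply_le ξ x]

theorem le_L_apply_of_mem_Sol2 (hx : x ∈ S.Sol2 z ξ) (hLx : 0 ≤ S.L x x)
    (hy : y ∈ S.M z ∩ S.DL) :
    S.Psi z x - S.Psi z y - (‖S.F x‖ + ‖S.E‖ + ‖ξ‖ * ‖S.gam‖) * ‖y - x‖ ≤ S.L x y := by
  have hF : S.F x (y - x) ≤ ‖S.F x‖ * ‖y - x‖ := (Real.le_norm_self _).trans ((S.F x).le_opNorm _)
  have hload := S.E_sub_comp_gam_apply_le ξ (x - y)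
  rw [norm_sub_rev, ← neg_sub y x, map_neg, map_neg, map_neg] at hload
  have hvi := hx.2 y hy
  rw [map_sub (S.L x)] at hvi
  linarith

end Sol2

/-- The radius of the ball `D₂` of multipliers `ξ` that goes with the radius `R` of the ball
containing `D₁`: the growth bound for `G (γ z)` with `‖z‖ ≤ R`, enlarged by `1` to be positive. -/
def multiplierRadius (S : QVISetting X Y) (R : ℝ) : ℝ :=
  S.cG * (‖S.gam‖ * R) ^ (S.p - 1) + S.dG + 1

theorem multiplierRadius_mul_norm_gam_mul (hp : S.p ≠ 0) {t : ℝ} (ht : 0 ≤ t) :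
    S.multiplierRadius t * ‖S.gam‖ * t =
      S.cG * ‖S.gam‖ ^ S.p * t ^ S.p + (S.dG + 1) * ‖S.gam‖ * t := by
  have hγt : 0 ≤ ‖S.gam‖ * t := by positivity
  have hpow : (‖S.gam‖ * t) ^ (S.p - 1) * (‖S.gam‖ * t) = ‖S.gam‖ ^ S.p * t ^ S.p := by
    rw [← Real.rpow_add_one' hγt (by simpa using hp), sub_add_cancel,
      Real.mul_rpow (norm_nonneg _) ht]
  rw [multiplierRadius]
  linear_combination S.cG * hpow

namespace AprioriConditions

theorem one_lt_p (h : S.AprioriConditions) : 1 < S.p := h.one_le_beta.trans_lt h.beta_lt_p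

theorem exists_ball_subset_M (h : S.AprioriConditions) :
    ∃ r > 0, ∀ z ∈ S.K, Metric.ball 0 r ⊆ S.M z := by
  obtain ⟨r, hr, hball⟩ := Metric.mem_nhds_iff.1 (mem_interior_iff_mem_nhds.1 h.zero_mem_interior_M)
  exact ⟨r, hr, fun z hz => hball.trans (biInter_subset_of_mem hz)⟩

theorem zero_mem_M_inter_DL (h : S.AprioriConditions) {z : X} (hz : z ∈ S.K) : 0 ∈ S.M z ∩ S.DL :=
  ⟨mem_iInter₂.1 (interior_subset h.zero_mem_interior_M) z hz, h.zero_mem_DL⟩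

theorem exists_le_Psi (h : S.AprioriConditions) (R : ℝ) : ∃ C, ∀ z y, ‖y‖ ≤ R → C ≤ S.Psi z y := by
  refine ⟨-S.cPsi * R ^ S.beta - S.dPsi, fun z y hy => le_trans ?_ (h.le_Psi z y)⟩
  have hβ : 0 ≤ S.beta := zero_le_one.trans h.one_le_beta
  have hpow : S.cPsi * ‖y‖ ^ S.beta ≤ S.cPsi * R ^ S.beta :=
    mul_le_mul_of_nonneg_left (Real.rpow_le_rpow (norm_nonneg y) hy hβ) h.cPsi_nonneg
  linarith

theorem exists_norm_F_le (h : S.AprioriConditions) (R : ℝ) : ∃ C, ∀ x, ‖x‖ ≤ R → ‖S.F x‖ ≤ C := by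
  obtain ⟨C, hC⟩ := (h.F_bounded _ (Metric.isBounded_closedBall (x := 0) (r := R))).exists_norm_le
  exact ⟨C, fun x hx => hC _ ⟨x, mem_closedBall_zero_iff.2 hx, rfl⟩⟩

theorem multiplierRadius_pos (h : S.AprioriConditions) {R : ℝ} (hR : 0 ≤ R) :
    0 < S.multiplierRadius R := by
  have hcG := h.cG_nonneg
  have hdG := h.dG_nonneg
  rw [multiplierRadius]
  positivity

theorem multiplierRadius_le (h : S.AprioriConditions) {R t : ℝ} (hR : 0 ≤ R) (hRt : R ≤ t) :
    S.multiplierRadius R ≤ S.multiplierRadius t := by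
  have hcG := h.cG_nonneg
  have hp : 0 ≤ S.p - 1 := sub_nonneg.2 h.one_lt_p.le
  rw [multiplierRadius, multiplierRadius]
  gcongr

theorem norm_le_multiplierRadius (h : S.AprioriConditions) {z : X} {R : ℝ} (hz : ‖z‖ ≤ R)
    {ζ : Y →L[ℝ] ℝ} (hζ : ζ ∈ S.G (S.gam z)) : ‖ζ‖ ≤ S.multiplierRadius R := by
  have hcG := h.cG_nonneg
  have hp : 0 ≤ S.p - 1 := sub_nonneg.2 h.one_lt_p.le
  calc ‖ζ‖ ≤ S.cG * ‖S.gam z‖ ^ (S.p - 1) + S.dG := h.G_growth _ ζ hζ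
    _ ≤ S.cG * (‖S.gam‖ * R) ^ (S.p - 1) + S.dG := by
      gcongr
      exact S.gam.le_opNorm_of_le hz
    _ ≤ S.multiplierRadius R := le_add_of_nonneg_right zero_le_one

theorem cF_mul_norm_rpow_le (h : S.AprioriConditions) {z x : X} {ξ : Y →L[ℝ] ℝ}
    (hz : z ∈ S.K) (hx : x ∈ S.Sol2 z ξ) :
    S.cF * ‖x‖ ^ S.p ≤ S.dF + S.ePsi + S.dPsi + S.cPsi * ‖x‖ ^ S.beta
      + (‖S.E‖ + ‖ξ‖ * ‖S.gam‖) * ‖x‖ := by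
  have htest := F_apply_self_le_of_mem_Sol2 hx (h.L_apply_self_nonneg x hx.1.2)
    (h.zero_mem_M_inter_DL hz)
  linarith [h.F_coercive x, h.Psi_zero_le z, h.le_Psi z x]

theorem eventually_forall_norm_le (h : S.AprioriConditions) (hsmall : S.cG * ‖S.gam‖ ^ S.p < S.cF) :
    ∀ᶠ R in atTop, ∀ z ∈ S.K, ∀ ξ : Y →L[ℝ] ℝ, ‖ξ‖ ≤ S.multiplierRadius R →
      ∀ x ∈ S.Sol2 z ξ, ‖x‖ ≤ R := by
  have hdom := eventually_forall_ge_atTop.2 <|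
    eventually_add_mul_rpow_add_mul_lt (S.dF + S.ePsi + S.dPsi) S.cPsi
      (‖S.E‖ + (S.dG + 1) * ‖S.gam‖) h.beta_lt_p h.one_lt_p (sub_pos.2 hsmall)
  filter_upwards [hdom, eventually_ge_atTop 0] with R hdom hR z hz ξ hξ x hx
  by_contra! hRx
  have hξx : ‖ξ‖ ≤ S.multiplierRadius ‖x‖ := hξ.trans (h.multiplierRadius_le hR hRx.le)
  have hload : ‖ξ‖ * ‖S.gam‖ * ‖x‖ ≤
      S.cG * ‖S.gam‖ ^ S.p * ‖x‖ ^ S.p + (S.dG + 1) * ‖S.gam‖ * ‖x‖ := by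
    rw [← multiplierRadius_mul_norm_gam_mul (zero_lt_one.trans h.one_lt_p).ne' (norm_nonneg x)]
    gcongr
  linarith [h.cF_mul_norm_rpow_le hz hx, hdom ‖x‖ hRx.le]

theorem exists_forall_norm_L_le (h : S.AprioriConditions) (R ρ : ℝ) :
    ∃ C, ∀ z ∈ S.K, ‖z‖ ≤ R → ∀ ξ : Y →L[ℝ] ℝ, ‖ξ‖ ≤ ρ →
      ∀ x ∈ S.Sol2 z ξ, ‖x‖ ≤ R → ‖S.L x‖ ≤ C := by
  obtain ⟨r, hr, hball⟩ := h.exists_ball_subset_M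
  obtain ⟨a, ha⟩ := h.exists_le_Psi R
  obtain ⟨b, hb⟩ := h.exists_Psi_le (Metric.closedBall 0 R) (Metric.ball 0 r)
    Metric.isBounded_closedBall Metric.isBounded_ball
  obtain ⟨CF, hCF⟩ := h.exists_norm_F_le R
  refine ⟨(b - a + (CF + ‖S.E‖ + ρ * ‖S.gam‖) * (r + R)) / r, fun z hz hzR ξ hξ x hx hxR =>
    opNorm_le_div_of_dense_of_neg_le h.dense_DL hr fun v hvD hvr => ?_⟩
  have hv : v ∈ Metric.ball 0 r := mem_ball_zero_iff.2 hvr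
  have hvx : ‖v - x‖ ≤ r + R := (norm_sub_le v x).trans (add_le_add hvr.le hxR)
  have hforce : (‖S.F x‖ + ‖S.E‖ + ‖ξ‖ * ‖S.gam‖) * ‖v - x‖ ≤
      (CF + ‖S.E‖ + ρ * ‖S.gam‖) * (r + R) := by
    have hCF0 : 0 ≤ CF := (norm_nonneg _).trans (hCF x hxR)
    have hρ0 : 0 ≤ ρ := (norm_nonneg ξ).trans hξ
    gcongr
    exact hCF x hxR
  have htest := le_L_apply_of_mem_Sol2 hx (h.L_apply_self_nonneg x hx.1.2) ⟨hball z hz hv, hvD⟩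
  linarith [ha z x hxR, hb z (mem_closedBall_zero_iff.2 hzR) v hv]

end AprioriConditions

end QVISetting

theorem statement5_general {X Y : Type*} [NormedAddCommGroup X] [NormedSpace ℝ X]
    [NormedAddCommGroup Y] [NormedSpace ℝ Y] {S : QVISetting X Y} (h : S.AprioriConditions)
    (hsmall : S.cG * ‖S.gam‖ ^ S.p < S.cF) :
    ∃ c₀ c₂ c₅ : ℝ, 0 < c₀ ∧ 0 < c₂ ∧ 0 < c₅ ∧
      ∀ z ∈ S.K, ‖z‖ ≤ c₀ →
        (∀ ξ : Y →L[ℝ] ℝ, ‖ξ‖ ≤ c₂ → ∀ x ∈ S.Sol2 z ξ,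
          x ∈ S.K ∩ S.DL ∧ ‖x‖ ≤ c₀ ∧ ‖S.L x‖ ≤ c₅) ∧
        (∀ ζ ∈ S.G (S.gam z), ‖ζ‖ ≤ c₂) := by
  obtain ⟨c₀, hbound, hc₀⟩ :=
    ((h.eventually_forall_norm_le hsmall).and (eventually_gt_atTop 0)).exists
  obtain ⟨C, hC⟩ := h.exists_forall_norm_L_le c₀ (S.multiplierRadius c₀)
  refine ⟨c₀, S.multiplierRadius c₀, max C 1, hc₀, h.multiplierRadius_pos hc₀.le, by positivity,
    fun z hz hz₀ => ⟨fun ξ hξ x hx => ?_, fun ζ hζ => h.norm_le_multiplierRadius hz₀ hζ⟩⟩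
  have hx₀ : ‖x‖ ≤ c₀ := hbound z hz ξ hξ x hx
  exact ⟨⟨h.M_subset_K z hz hx.1.1, hx.1.2⟩, hx₀,
    (hC z hz hz₀ ξ hξ x hx hx₀).trans (le_max_left C 1)⟩

/-- under the hypotheses of Statement 0 and strict monotonicity
of `F`, there are constants `c₀, c₂, c₅ > 0` such that the multivalued map
`Q(z, ξ) = {S(z, ξ)} × G(γ z)` maps `D₁ × D₂` into itself, where
`D₁ = {x ∈ K ∩ D(L) : ‖x‖_X ≤ c₀, ‖Lx‖_{X*} ≤ c₅}` and
`D₂ = {ξ ∈ Y* : ‖ξ‖_{Y*} ≤ c₂}`. -/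
theorem statement5 {X Y : Type*} [NormedAddCommGroup X] [NormedSpace ℝ X]
    [NormedAddCommGroup Y] [NormedSpace ℝ Y] [CompleteSpace X] [CompleteSpace Y]
    [TopologicalSpace.SeparableSpace X] [TopologicalSpace.SeparableSpace Y]
    (hreflX : IsReflexiveSpace X) (hreflY : IsReflexiveSpace Y)
    (S : QVISetting X Y)
    (hK : S.HK) (hL : S.HL) (hM : S.HM) (hF : S.HF) (hG : S.HG)
    (hgam : S.Hgam) (hPsi : S.HPsi)
    (hsmall : S.cG * ‖S.gam‖ ^ S.p < S.cF)
    (hstrict : S.StrictlyMonotoneF)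
    (Ssol : X → (Y →L[ℝ] ℝ) → X)
    (hSsol : ∀ z ∈ S.K, ∀ ξ : Y →L[ℝ] ℝ, S.Sol2 z ξ = {Ssol z ξ}) :
    ∃ c₀ c₂ c₅ : ℝ, 0 < c₀ ∧ 0 < c₂ ∧ 0 < c₅ ∧
      ∀ z ∈ S.K ∩ S.DL, ‖z‖ ≤ c₀ → ‖S.L z‖ ≤ c₅ →
        (∀ ξ : Y →L[ℝ] ℝ, ‖ξ‖ ≤ c₂ →
          Ssol z ξ ∈ S.K ∩ S.DL ∧ ‖Ssol z ξ‖ ≤ c₀ ∧ ‖S.L (Ssol z ξ)‖ ≤ c₅) ∧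
        (∀ η ∈ S.G (S.gam z), ‖η‖ ≤ c₂) := by
  obtain ⟨c₀, c₂, c₅, hc₀, hc₂, hc₅, h⟩ :=
    statement5_general (.of_hypotheses hL hM hF hG hPsi) hsmall
  exact ⟨c₀, c₂, c₅, hc₀, hc₂, hc₅, fun z hz hz₀ _ =>
    ⟨fun ξ hξ => (h z hz.1 hz₀).1 ξ hξ _ (hSsol z hz.1 ξ ▸ mem_singleton _), (h z hz.1 hz₀).2⟩⟩
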